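/- arXiv:1510.07561 — 2 statements merged into one kernel-verified Lean document; each statement's English description precedes it below -/
import Mathlib

section
/- Let C be a Weyl candidate on Minkowski space V with electric part E = E(C) and magnetic part B = B(C) with respect to a unit timelike vector n, let h be the spatial metric, let A = E_{μν}E^{μν} − B_{μν}B^{μν} and 𝖡 = 2E^{μν}B_{μν}, and let α, β be arbitrary real numbers. Define G_{μνλρ} = η_{μλ}η_{νρ} − η_{μρ}η_{νλ}. Then the 4-linear form ℛ_{μνλρ} := ½ C^{στ}_{ μν} C_{στλρ} + α C_{μνλρ} + β (C*)_{μνλρ} − (1/3)(A G_{μνλρ} − 𝖡 η_{μνλρ}) vanishes identically if and only if both spatial symmetric tensors 𝔞_{μν} := −B_{μ}^{ λ}B_{νλ} + E_{μ}^{ λ}E_{νλ} − (1/3)A h_{μν} − α E_{μν} − β B_{μν} and 𝔟_{μν} := B_{μ}^{ λ}E_{νλ} + B_{ν}^{ λ}E_{μλ} − (1/3)𝖡 h_{μν} − α B_{μν} + β E_{μν} vanish identically. -/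
noncomputable section

/-- Minkowski space `V = ℝ⁴`. -/
abbrev V4 : Type := Fin 4 → ℝ

/-- The Minkowski bilinear form of signature `(-,+,+,+)`. -/
def η (x y : V4) : ℝ := -(x 0 * y 0) + x 1 * y 1 + x 2 * y 2 + x 3 * y 3

/-- The standard basis of `V4`. -/
def e4 (a : Fin 4) : V4 := Pi.single a 1

/-- Components of the Minkowski metric `diag(-1,1,1,1)` (its own inverse). -/
def ηm (a b : Fin 4) : ℝ := if a = b then (if a = (0 : Fin 4) then -1 else 1) else 0

/-- A 4-linear form on `V4`, given by its components in the standard basis. -/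
abbrev T4 : Type := Fin 4 → Fin 4 → Fin 4 → Fin 4 → ℝ

/-- A bilinear form on `V4`, given by its components in the standard basis. -/
abbrev T2 : Type := Fin 4 → Fin 4 → ℝ

/-- Evaluation of a 4-linear form (given by components) on vectors. -/
def eval4 (W : T4) (x y z w : V4) : ℝ :=
  ∑ a : Fin 4, ∑ b : Fin 4, ∑ c : Fin 4, ∑ d : Fin 4, W a b c d * x a * y b * z c * w d

/-- The alternating volume 4-form with `vol(e₀,e₁,e₂,e₃) = 1`. -/
def volv (x y z w : V4) : ℝ := Matrix.det (Matrix.of ![x, y, z, w])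

/-- Components `η_{αβγδ}` of the volume form. -/
def volc (a b c d : Fin 4) : ℝ := volv (e4 a) (e4 b) (e4 c) (e4 d)

/-- Left dual `(*W)_{μνλρ} = ½ η_{μν}{}^{αβ} W_{αβλρ}`. -/
def leftDual (W : T4) : T4 := fun μ ν lam ρ =>
  (1/2) * ∑ γ : Fin 4, ∑ δ : Fin 4, ∑ a : Fin 4, ∑ b : Fin 4,
    volc μ ν γ δ * ηm γ a * ηm δ b * W a b lam ρ

/-- Right dual `(W*)_{μνλρ} = ½ W_{μν}{}^{αβ} η_{αβλρ}`. -/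
def rightDual (W : T4) : T4 := fun μ ν lam ρ =>
  (1/2) * ∑ γ : Fin 4, ∑ δ : Fin 4, ∑ a : Fin 4, ∑ b : Fin 4,
    W μ ν a b * ηm a γ * ηm b δ * volc γ δ lam ρ

/-- A Weyl candidate: pair antisymmetries, pair exchange, first Bianchi, trace-free. -/
def IsWeyl (W : T4) : Prop :=
  (∀ x y z w : V4, eval4 W x y z w = - eval4 W y x z w) ∧
  (∀ x y z w : V4, eval4 W x y z w = - eval4 W x y w z) ∧
  (∀ x y z w : V4, eval4 W x y z w = eval4 W z w x y) ∧
  (∀ x y z w : V4, eval4 W x y z w + eval4 W x z w y + eval4 W x w y z = 0) ∧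
  (∀ x y : V4, ∑ a : Fin 4, ∑ b : Fin 4, ηm a b * eval4 W (e4 a) x (e4 b) y = 0)

/-- Electric part `E(W)_{ab} = W(e_a, n, e_b, n)`. -/
def Epart (W : T4) (n : V4) : T2 := fun a b => eval4 W (e4 a) n (e4 b) n

/-- Magnetic part `B(W)_{ab} = (W*)(e_a, n, e_b, n)`. -/
def Bpart (W : T4) (n : V4) : T2 := fun a b => eval4 (rightDual W) (e4 a) n (e4 b) n

/-- Raise both indices of a bilinear form's components. -/
def up2 (S : T2) : T2 := fun a b => ∑ c : Fin 4, ∑ d : Fin 4, ηm a c * ηm b d * S c d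

/-- Full contraction `S_{ab} T^{ab}`. -/
def contr2 (S T : T2) : ℝ := ∑ a : Fin 4, ∑ b : Fin 4, S a b * up2 T a b

/-- Components of `G_{μνλρ} = η_{μλ}η_{νρ} − η_{μρ}η_{νλ}`. -/
def Gc : T4 := fun μ ν lam ρ => ηm μ lam * ηm ν ρ - ηm μ ρ * ηm ν lam

/-- A bilinear form with antisymmetric components. -/
def IsTwoForm (F : T2) : Prop := ∀ a b, F a b = -F b a

/-- The Hodge dual of a 2-form, written out in components. -/
def hodge (F : T2) : T2 :=
  ![![0, F 2 3, F 3 1, F 1 2], ![F 3 2, 0, F 3 0, F 0 2],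
    ![F 1 3, F 0 3, 0, F 1 0], ![F 2 1, F 2 0, F 0 1, 0]]

/-- The contraction `F_{στ} H^{στ}` of bilinear forms. -/
def pair2 (F H : T2) : ℝ :=
  ∑ σ : Fin 4, ∑ τ : Fin 4, ∑ σ' : Fin 4, ∑ τ' : Fin 4,
    ηm σ σ' * ηm τ τ' * F σ' τ' * H σ τ

/-- The contraction `v_λ w^λ` of covectors. -/
def pair1 (v w : V4) : ℝ :=
  ∑ lam : Fin 4, ∑ lam' : Fin 4, ηm lam lam' * v lam' * w lam

/-- The contraction `F(·, n)` of a bilinear form with a vector. -/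
def contrRight (F : T2) (n : V4) : V4 := fun a => ∑ b : Fin 4, F a b * n b

theorem twelve_mul_det_single (a b c d : Fin 4) :
    12 * (Matrix.of ![Pi.single a 1, Pi.single b 1, Pi.single c 1, Pi.single d 1] :
        Matrix (Fin 4) (Fin 4) ℤ).det =
      ((b : ℤ) - a) * (c - a) * (d - a) * (c - b) * (d - b) * (d - c) := by
  rw [Matrix.det_succ_row_zero]
  simp only [Matrix.det_fin_three, Fin.sum_univ_four]
  revert a b c d
  decide +kernel

theorem volc_eq (a b c d : Fin 4) :
    volc a b c d =
      ((b : ℝ) - a) * (c - a) * (d - a) * (c - b) * (d - b) * (d - c) / 12 := by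
  have hcast : volc a b c d =
      (((Matrix.of ![Pi.single a 1, Pi.single b 1, Pi.single c 1, Pi.single d 1] :
        Matrix (Fin 4) (Fin 4) ℤ).det : ℤ) : ℝ) := by
    rw [volc, volv, Int.cast_det]
    congr 1
    ext i j
    fin_cases i <;> simp [e4, Pi.single_apply]
  have h := congrArg (Int.cast : ℤ → ℝ) (twelve_mul_det_single a b c d)
  rw [Int.cast_mul, ← hcast] at h
  push_cast at h
  linarith

theorem IsTwoForm.diag {F : T2} (hF : IsTwoForm F) (a : Fin 4) : F a a = 0 := by
  linarith [hF a a]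

theorem IsTwoForm.ext {F H : T2} (hF : IsTwoForm F) (hH : IsTwoForm H)
    (h01 : F 0 1 = H 0 1) (h02 : F 0 2 = H 0 2) (h03 : F 0 3 = H 0 3)
    (h12 : F 1 2 = H 1 2) (h13 : F 1 3 = H 1 3) (h23 : F 2 3 = H 2 3) : F = H := by
  ext a b
  have := hF a b
  have := hH a b
  fin_cases a <;> fin_cases b <;> simp_all [hF.diag, hH.diag]

theorem IsTwoForm.hodge {F : T2} (hF : IsTwoForm F) : IsTwoForm (hodge F) := by
  intro a b
  fin_cases a <;> fin_cases b <;> simp [_root_.hodge] <;> exact hF _ _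

theorem IsTwoForm.hodge_hodge {F : T2} (hF : IsTwoForm F) (a b : Fin 4) :
    _root_.hodge (_root_.hodge F) a b = -F a b := by
  fin_cases a <;> fin_cases b <;> simp [_root_.hodge, hF.diag] <;> exact hF _ _

theorem hodge_zero : hodge 0 = 0 := by
  ext a b
  fin_cases a <;> fin_cases b <;> simp [hodge]

theorem hodge_add (F H : T2) : hodge (F + H) = hodge F + hodge H := by
  ext a b
  fin_cases a <;> fin_cases b <;> simp [hodge]

theorem hodge_smul (r : ℝ) (F : T2) : hodge (r • F) = r • hodge F := by
  ext a b
  fin_cases a <;> fin_cases b <;> simp [hodge]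

theorem hodge_sub (F H : T2) : hodge (F - H) = hodge F - hodge H := by
  ext a b
  fin_cases a <;> fin_cases b <;> simp [hodge]

theorem rightDual_eq_hodge (W : T4) (μ ν : Fin 4) (hW : IsTwoForm (W μ ν)) :
    rightDual W μ ν = hodge (W μ ν) := by
  ext lam ρ
  simp only [rightDual, volc_eq, ηm, Fin.sum_univ_four, Fin.isValue]
  fin_cases lam <;> fin_cases ρ <;> simp [hodge] <;>
    linarith [hW 0 1, hW 0 2, hW 0 3, hW 1 2, hW 1 3, hW 2 3]

/-- The Hodge dual is self-adjoint for the contraction of 2-forms. -/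
theorem pair2_hodge_left {F H : T2} (hF : IsTwoForm F) (hH : IsTwoForm H) :
    pair2 (hodge F) H = pair2 F (hodge H) := by
  simp [pair2, ηm, Fin.sum_univ_four, hodge, hF 1 0, hF 2 0, hF 3 0, hF 2 1, hF 3 1, hF 3 2,
    hH 1 0, hH 2 0, hH 3 0, hH 2 1, hH 3 1, hH 3 2]
  ring

theorem pair2_eq {F H : T2} (hF : IsTwoForm F) (hH : IsTwoForm H) {n : V4}
    (hn : η n n = -1) :
    (1/2) * pair2 F H =
      pair1 (contrRight (hodge F) n) (contrRight (hodge H) n)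
        - pair1 (contrRight F n) (contrRight H n) := by
  have key : -(η n n) * ((1/2) * pair2 F H) =
      pair1 (contrRight (hodge F) n) (contrRight (hodge H) n)
        - pair1 (contrRight F n) (contrRight H n) := by
    simp only [pair2, pair1, contrRight, ηm, Fin.sum_univ_four, hodge, η]
    simp [hF.diag, hH.diag, hF 1 0, hF 2 0, hF 3 0, hF 2 1, hF 3 1, hF 3 2,
      hH 1 0, hH 2 0, hH 3 0, hH 2 1, hH 3 1, hH 3 2]
    ring
  rw [hn] at key
  linarith

/-- A 2-form whose electric and magnetic parts vanish is zero. -/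
theorem IsTwoForm.eq_zero {F : T2} (hF : IsTwoForm F) {n : V4} (hn : η n n = -1)
    (hE : ∀ a, contrRight F n a = 0) (hB : ∀ a, contrRight (_root_.hodge F) n a = 0) :
    F = 0 := by
  have hpair : ∀ H : T2, IsTwoForm H → pair2 F H = 0 := by
    intro H hH
    have := pair2_eq hF hH hn
    simp only [pair1, hE, hB] at this
    simpa using this
  let H : T2 := fun a b => if a = 0 ∨ b = 0 then -F a b else F a b
  have hH : IsTwoForm H := by
    intro a b
    simp only [H, or_comm (a := a = 0)]
    split_ifs <;> linarith [hF a b]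
  have hsum : ∑ a, ∑ b, F a b ^ 2 = 0 := by
    rw [← hpair H hH]
    simp [pair2, ηm, Fin.sum_univ_four, H]
    ring_nf
    simp [hF.diag]
  ext a b
  have hrow := (Finset.sum_eq_zero_iff_of_nonneg
    (fun a _ => Finset.sum_nonneg fun b _ => sq_nonneg (F a b))).1 hsum a (Finset.mem_univ a)
  have := (Finset.sum_eq_zero_iff_of_nonneg (fun b _ => sq_nonneg (F a b))).1 hrow b
    (Finset.mem_univ b)
  simpa using this

/-- A double 2-form commuting with the Hodge dual whose electric and magnetic parts vanish
is zero. -/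
theorem doubleTwoForm_eq_zero {W : T4} (hl : ∀ c d, IsTwoForm fun a b => W a b c d)
    (hr : ∀ a b, IsTwoForm (W a b))
    (hW : ∀ a b c d, hodge (fun a b => W a b c d) a b = hodge (W a b) c d)
    {n : V4} (hn : η n n = -1)
    (hE : ∀ a c, ∑ b, ∑ d, W a b c d * n b * n d = 0)
    (hB : ∀ a c, ∑ b, ∑ d, hodge (W a b) c d * n b * n d = 0) :
    ∀ a b c d, W a b c d = 0 := by
  have hodge_contr : ∀ c a b, hodge (fun a b => contrRight (W a b) n c) a b =
      contrRight (hodge (W a b)) n c := by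
    intro c a b
    simp only [contrRight, ← hW]
    fin_cases a <;> fin_cases b <;> simp [hodge]
  have hform : ∀ c, IsTwoForm fun a b => contrRight (W a b) n c := by
    intro c a b
    simp only [contrRight, ← Finset.sum_neg_distrib, ← neg_mul]
    exact Finset.sum_congr rfl fun d _ => congrArg (· * n d) (hl c d a b)
  have hzero : ∀ c, (fun a b => contrRight (W a b) n c) = 0 := by
    intro c
    refine (hform c).eq_zero hn (fun a => ?_) (fun a => ?_)
    · rw [← hE a c]
      simp only [contrRight, Finset.sum_mul]
      exact Finset.sum_congr rfl fun b _ => Finset.sum_congr rfl fun d _ => by ring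
    · rw [← hB a c]
      unfold contrRight
      refine Finset.sum_congr rfl fun b _ => ?_
      have := hodge_contr c a b
      unfold contrRight at this
      rw [this, Finset.sum_mul]
      exact Finset.sum_congr rfl fun d _ => by ring
  intro a b c d
  have : W a b = 0 := by
    refine (hr a b).eq_zero hn (fun c => congrFun₂ (hzero c) a b) (fun c => ?_)
    rw [← hodge_contr c a b, hzero c]
    fin_cases a <;> fin_cases b <;> simp [hodge]
  rw [this]
  rfl

theorem eval4_e4 (W : T4) (a b c d : Fin 4) :
    eval4 W (e4 a) (e4 b) (e4 c) (e4 d) = W a b c d := by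
  simp [eval4, e4, Pi.single_apply]

theorem eval4_e4_right (W : T4) (n : V4) (a c : Fin 4) :
    eval4 W (e4 a) n (e4 c) n = ∑ b, ∑ d, W a b c d * n b * n d := by
  simp [eval4, e4, Pi.single_apply]

theorem IsWeyl.twoForm_left {W : T4} (hW : IsWeyl W) (c d : Fin 4) :
    IsTwoForm fun a b => W a b c d := fun a b => by
  simpa only [eval4_e4] using hW.1 (e4 a) (e4 b) (e4 c) (e4 d)

theorem IsWeyl.twoForm_right {W : T4} (hW : IsWeyl W) (a b : Fin 4) :
    IsTwoForm (W a b) := fun c d => by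
  simpa only [eval4_e4] using hW.2.1 (e4 a) (e4 b) (e4 c) (e4 d)

theorem IsWeyl.pair_symm {W : T4} (hW : IsWeyl W) (a b c d : Fin 4) :
    W a b c d = W c d a b := by
  simpa only [eval4_e4] using hW.2.2.1 (e4 a) (e4 b) (e4 c) (e4 d)

theorem IsWeyl.bianchi {W : T4} (hW : IsWeyl W) (a b c d : Fin 4) :
    W a b c d + W a c d b + W a d b c = 0 := by
  simpa only [eval4_e4] using hW.2.2.2.1 (e4 a) (e4 b) (e4 c) (e4 d)

theorem IsWeyl.trace {W : T4} (hW : IsWeyl W) (b d : Fin 4) :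
    -W 0 b 0 d + W 1 b 1 d + W 2 b 2 d + W 3 b 3 d = 0 := by
  simpa [eval4_e4, ηm, Fin.sum_univ_four] using hW.2.2.2.2 (e4 b) (e4 d)

/-- The left and right duals of a Weyl candidate agree. -/
theorem IsWeyl.hodge_comm {W : T4} (hW : IsWeyl W) (a b c d : Fin 4) :
    hodge (fun a b => W a b c d) a b = hodge (W a b) c d := by
  have hl : ∀ a b c d, W a b c d = -W b a c d := fun a b c d => hW.twoForm_left c d a b
  have hr := hW.twoForm_right
  have hp := hW.pair_symm
  have hb := hW.bianchi 0 1 2 3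
  have ht00 := hW.trace 0 0
  have ht01 := hW.trace 0 1
  have ht02 := hW.trace 0 2
  have ht03 := hW.trace 0 3
  have ht11 := hW.trace 1 1
  have ht12 := hW.trace 1 2
  have ht13 := hW.trace 1 3
  have ht22 := hW.trace 2 2
  have ht23 := hW.trace 2 3
  have ht33 := hW.trace 3 3
  have hll : ∀ a c d, W a a c d = 0 := fun a c d => (hW.twoForm_left c d).diag a
  have hrr : ∀ a b c, W a b c c = 0 := fun a b c => (hr a b).diag c
  have hform : ∀ c d, IsTwoForm fun a b => hodge (W a b) c d := by
    intro c d a b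
    fin_cases c <;> fin_cases d <;> simp [hodge] <;> exact hl _ _ _ _
  have hform' : ∀ a b, IsTwoForm fun c d => hodge (fun a b => W a b c d) a b := by
    intro a b c d
    fin_cases a <;> fin_cases b <;> simp [hodge] <;> exact hr _ _ _ _
  refine congrFun₂ (IsTwoForm.ext (hform' a b) (hr a b).hodge ?_ ?_ ?_ ?_ ?_ ?_) c d <;>
    refine congrFun₂ (IsTwoForm.ext (hW.twoForm_left _ _).hodge (hform _ _) ?_ ?_ ?_ ?_ ?_ ?_)
      a b <;>
    simp only [hodge, Matrix.cons_val]
  all_goals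
    simp only [hl 1 0, hl 2 0, hl 3 0, hl 2 1, hl 3 1, hl 3 2, hll, hrr,
      fun a b => hr a b 1 0, fun a b => hr a b 2 0, fun a b => hr a b 3 0,
      fun a b => hr a b 2 1, fun a b => hr a b 3 1, fun a b => hr a b 3 2,
      hp 0 2 0 1, hp 0 3 0 1, hp 1 2 0 1, hp 1 3 0 1, hp 2 3 0 1, hp 0 3 0 2, hp 1 2 0 2,
      hp 1 3 0 2, hp 2 3 0 2, hp 1 2 0 3, hp 1 3 0 3, hp 2 3 0 3, hp 1 3 1 2, hp 2 3 1 2,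
      hp 2 3 1 3] at * <;>
    linarith

theorem IsWeyl.hodge_pair2 {W : T4} (hW : IsWeyl W) (F : T2) (c d : Fin 4) :
    hodge (fun c d => pair2 F (W c d)) c d = pair2 F (hodge (W c d)) := by
  have : hodge (W c d) = fun σ τ => hodge (fun c d => W c d σ τ) c d := by
    ext σ τ
    exact (hW.hodge_comm c d σ τ).symm
  rw [this]
  fin_cases c <;> fin_cases d <;> simp [hodge, pair2]

theorem Gc_pair_symm (a b c d : Fin 4) : Gc a b c d = Gc c d a b := by
  have hη : ∀ a b, ηm a b = ηm b a := fun a b => by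
    by_cases h : a = b
    · rw [h]
    · simp [ηm, h, Ne.symm h]
  rw [Gc, Gc, hη a c, hη b d, hη a d, hη b c]
  ring

theorem volc_pair_symm (a b c d : Fin 4) : volc a b c d = volc c d a b := by
  simp only [volc_eq]
  ring

theorem hodge_Gc (μ ν : Fin 4) : hodge (Gc μ ν) = volc μ ν := by
  have hG : IsTwoForm (Gc μ ν) := fun a b => by simp only [Gc]; ring
  have hvol : IsTwoForm (volc μ ν) := fun a b => by simp only [volc_eq]; ring
  refine hG.hodge.ext hvol ?_ ?_ ?_ ?_ ?_ ?_ <;>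
    fin_cases μ <;> fin_cases ν <;> simp [hodge, Gc, ηm, volc_eq] <;> norm_num

theorem pair2_comm (F H : T2) : pair2 F H = pair2 H F := by
  simp [pair2, ηm, Fin.sum_univ_four]
  ring

theorem pair1_comm (v w : V4) : pair1 v w = pair1 w v := by
  simp [pair1, ηm, Fin.sum_univ_four]
  ring

theorem sum_pair2_mul (K L : Fin 4 → T2) (n : V4) :
    ∑ b, ∑ d, pair2 (K b) (L d) * n b * n d =
      pair2 (fun σ τ => ∑ b, K b σ τ * n b) (fun σ τ => ∑ d, L d σ τ * n d) := by
  simp [pair2, ηm, Fin.sum_univ_four]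
  ring

theorem hodge_sum_mul (K : Fin 4 → T2) (n : V4) :
    hodge (fun σ τ => ∑ b, K b σ τ * n b) = fun σ τ => ∑ b, hodge (K b) σ τ * n b := by
  ext σ τ
  fin_cases σ <;> fin_cases τ <;> simp [hodge]

theorem sum_Gc_mul {n : V4} (hn : η n n = -1) (a c : Fin 4) :
    ∑ b, ∑ d, Gc a b c d * n b * n d = -(ηm a c + η n (e4 a) * η n (e4 c)) := by
  have key : ∑ b, ∑ d, Gc a b c d * n b * n d =
      ηm a c * η n n - η n (e4 a) * η n (e4 c) := by
    fin_cases a <;> fin_cases c <;>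
      simp [Gc, ηm, η, e4, Fin.sum_univ_four] <;> ring
  rw [key, hn]
  ring

theorem sum_volc_mul (n : V4) (a c : Fin 4) :
    ∑ b, ∑ d, volc a b c d * n b * n d = 0 := by
  simp [volc_eq, Fin.sum_univ_four]
  ring

/-- the 4-linear form ℛ built from a Weyl candidate `C` vanishes identically
iff the spatial symmetric tensors `𝔞` and `𝔟` vanish identically. -/
theorem stmt_0 (C : T4) (hC : IsWeyl C) (n : V4) (hn : η n n = -1) (α β : ℝ)
    (E B : T2) (hE : E = Epart C n) (hB : B = Bpart C n)
    (h : T2) (hh : h = fun a b => ηm a b + η n (e4 a) * η n (e4 b))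
    (A Bs : ℝ) (hA : A = contr2 E E - contr2 B B) (hBs : Bs = 2 * contr2 E B)
    (R : T4)
    (hR : R = fun μ ν lam ρ =>
      (1/2) * (∑ σ : Fin 4, ∑ τ : Fin 4, ∑ σ' : Fin 4, ∑ τ' : Fin 4,
        ηm σ σ' * ηm τ τ' * C σ' τ' μ ν * C σ τ lam ρ)
      + α * C μ ν lam ρ + β * rightDual C μ ν lam ρ
      - (1/3) * (A * Gc μ ν lam ρ - Bs * volc μ ν lam ρ))
    (fa fb : T2)
    (hfa : fa = fun μ ν =>
      -(∑ lam : Fin 4, ∑ lam' : Fin 4, ηm lam lam' * B μ lam' * B ν lam)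
      + (∑ lam : Fin 4, ∑ lam' : Fin 4, ηm lam lam' * E μ lam' * E ν lam)
      - (1/3) * A * h μ ν - α * E μ ν - β * B μ ν)
    (hfb : fb = fun μ ν =>
      (∑ lam : Fin 4, ∑ lam' : Fin 4, ηm lam lam' * B μ lam' * E ν lam)
      + (∑ lam : Fin 4, ∑ lam' : Fin 4, ηm lam lam' * B ν lam' * E μ lam)
      - (1/3) * Bs * h μ ν - α * B μ ν + β * E μ ν) :
    (∀ μ ν lam ρ, R μ ν lam ρ = 0) ↔
      ((∀ μ ν, fa μ ν = 0) ∧ (∀ μ ν, fb μ ν = 0)) := by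
  subst hE hB hh hfa hfb
  have hr := hC.twoForm_right
  have hp : ∀ a b, (fun σ τ => C σ τ a b) = C a b := fun a b => by
    ext σ τ
    exact hC.pair_symm σ τ a b
  have hdual : ∀ a b, rightDual C a b = hodge (C a b) := fun a b =>
    rightDual_eq_hodge C a b (hr a b)
  have hodgeC_symm : ∀ a b c d, hodge (C a b) c d = hodge (C c d) a b := fun a b c d => by
    rw [← hC.hodge_comm a b c d, hp]
  have hodgeG : ∀ a b, hodge (volc a b) = -Gc a b := fun a b => by
    ext c d
    rw [← hodge_Gc]
    exact IsTwoForm.hodge_hodge (fun c d => by simp only [Gc]; ring) c d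
  have hRC : ∀ a b c d, R a b c d = (1/2) * pair2 (C a b) (C c d) + α * C a b c d
      + β * hodge (C a b) c d - (1/3) * (A * Gc a b c d - Bs * volc a b c d) := by
    intro a b c d
    have hpair : pair2 (C a b) (C c d) = pair2 (fun σ τ => C σ τ a b) fun σ τ => C σ τ c d := by
      rw [hp, hp]
    rw [hR, ← hdual, hpair]
    rfl
  have hRdual : ∀ a b c d, hodge (R a b) c d = (1/2) * pair2 (C a b) (hodge (C c d))
      + α * hodge (C a b) c d - β * C a b c d
      - (1/3) * (A * volc a b c d + Bs * Gc a b c d) := by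
    intro a b c d
    have hlin : R a b = (1/2 : ℝ) • (fun c d => pair2 (C a b) (C c d)) + α • C a b
        + β • hodge (C a b) - (1/3 : ℝ) • (A • Gc a b - Bs • volc a b) := by
      ext c d
      exact hRC a b c d
    rw [hlin]
    simp only [hodge_add, hodge_sub, hodge_smul, hodge_Gc, hodgeG, Pi.add_apply, Pi.sub_apply,
      Pi.smul_apply, Pi.neg_apply, smul_eq_mul, hC.hodge_pair2, (hr a b).hodge_hodge]
    ring
  have hR_symm : ∀ a b c d, R a b c d = R c d a b := fun a b c d => by
    rw [hRC, hRC, pair2_comm, hC.pair_symm a b, hodgeC_symm a b, Gc_pair_symm a b, volc_pair_symm a b]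
  have hR_right : ∀ a b, IsTwoForm (R a b) := fun a b c d => by
    have hneg : C c d = -C d c := by
      ext σ τ
      exact hC.twoForm_left σ τ c d
    have hpair : pair2 (C a b) (C c d) = -pair2 (C a b) (C d c) := by
      rw [hneg]
      simp [pair2]
    rw [hRC, hRC, hpair, hr a b c d, (hr a b).hodge c d]
    simp only [Gc, volc_eq]
    ring
  have hR_flip : ∀ c d, (fun a b => R a b c d) = R c d := fun c d => by
    ext a b
    exact hR_symm a b c d
  have hR_comm : ∀ a b c d, hodge (fun a b => R a b c d) a b = hodge (R a b) c d := by
    intro a b c d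
    rw [hR_flip, hRdual, hRdual, pair2_comm, pair2_hodge_left (hr a b) (hr c d),
      hC.pair_symm a b, hodgeC_symm a b, Gc_pair_symm a b, volc_pair_symm a b]
  -- the 2-forms `C(e_a, n, ·, ·)`
  let F : Fin 4 → T2 := fun a σ τ => ∑ b, C a b σ τ * n b
  have hF : ∀ a, IsTwoForm (F a) := fun a σ τ => by
    simp only [F, ← Finset.sum_neg_distrib, ← neg_mul]
    exact Finset.sum_congr rfl fun b _ => congrArg (· * n b) (hr a b σ τ)
  have hFdual : ∀ a, hodge (F a) = fun σ τ => ∑ b, hodge (C a b) σ τ * n b := fun a =>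
    hodge_sum_mul (C a) n
  have hEpart : ∀ a c, Epart C n a c = ∑ b, ∑ d, C a b c d * n b * n d := fun a c =>
    eval4_e4_right C n a c
  have hBpart : ∀ a c, Bpart C n a c = ∑ b, ∑ d, hodge (C a b) c d * n b * n d := fun a c => by
    simp only [← hdual]
    exact eval4_e4_right (rightDual C) n a c
  have hFE : ∀ a, contrRight (F a) n = Epart C n a := fun a => by
    ext c
    rw [hEpart, Finset.sum_comm]
    simp only [contrRight, F, Finset.sum_mul]
  have hFB : ∀ a, contrRight (hodge (F a)) n = Bpart C n a := fun a => by
    ext c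
    rw [hBpart, Finset.sum_comm]
    simp only [contrRight, hFdual, Finset.sum_mul]
  have hFB' : ∀ a, contrRight (hodge (hodge (F a))) n = -Epart C n a := fun a => by
    rw [← hFE]
    ext c
    simp [contrRight, (hF a).hodge_hodge]
  have hER : ∀ a c, ∑ b, ∑ d, R a b c d * n b * n d =
      -(-pair1 (Bpart C n a) (Bpart C n c) + pair1 (Epart C n a) (Epart C n c)
        - (1/3) * A * (ηm a c + η n (e4 a) * η n (e4 c))
        - α * Epart C n a c - β * Bpart C n a c) := by
    intro a c
    have hsplit : ∑ b, ∑ d, R a b c d * n b * n d =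
        (1/2) * (∑ b, ∑ d, pair2 (C a b) (C c d) * n b * n d)
        + α * (∑ b, ∑ d, C a b c d * n b * n d)
        + β * (∑ b, ∑ d, hodge (C a b) c d * n b * n d)
        - (1/3) * (A * (∑ b, ∑ d, Gc a b c d * n b * n d)
          - Bs * ∑ b, ∑ d, volc a b c d * n b * n d) := by
      simp only [hRC, Finset.mul_sum, ← Finset.sum_add_distrib, ← Finset.sum_sub_distrib]
      exact Finset.sum_congr rfl fun b _ => Finset.sum_congr rfl fun d _ => by ring
    rw [hsplit, sum_pair2_mul, pair2_eq (hF a) (hF c) hn, hFE, hFE, hFB, hFB, sum_Gc_mul hn,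
      sum_volc_mul, ← hEpart, ← hBpart]
    ring
  have hBR : ∀ a c, ∑ b, ∑ d, hodge (R a b) c d * n b * n d =
      -(pair1 (Bpart C n a) (Epart C n c) + pair1 (Bpart C n c) (Epart C n a)
        - (1/3) * Bs * (ηm a c + η n (e4 a) * η n (e4 c))
        - α * Bpart C n a c + β * Epart C n a c) := by
    intro a c
    have hsplit : ∑ b, ∑ d, hodge (R a b) c d * n b * n d =
        (1/2) * (∑ b, ∑ d, pair2 (C a b) (hodge (C c d)) * n b * n d)
        + α * (∑ b, ∑ d, hodge (C a b) c d * n b * n d)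
        - β * (∑ b, ∑ d, C a b c d * n b * n d)
        - (1/3) * (A * (∑ b, ∑ d, volc a b c d * n b * n d)
          + Bs * ∑ b, ∑ d, Gc a b c d * n b * n d) := by
      simp only [hRdual, Finset.mul_sum, ← Finset.sum_add_distrib, ← Finset.sum_sub_distrib]
      exact Finset.sum_congr rfl fun b _ => Finset.sum_congr rfl fun d _ => by ring
    have hneg : pair1 (Bpart C n a) (-Epart C n c) = -pair1 (Bpart C n a) (Epart C n c) := by
      simp [pair1]
    rw [hsplit, sum_pair2_mul (C a) (fun d => hodge (C c d)), ← hFdual,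
      pair2_eq (hF a) (hF c).hodge hn, hFE, hFB, hFB, hFB', hneg,
      pair1_comm (Epart C n a), sum_Gc_mul hn, sum_volc_mul, ← hEpart, ← hBpart]
    ring
  constructor
  · intro h0
    have hR0 : ∀ a b, R a b = 0 := fun a b => funext₂ (h0 a b)
    refine ⟨fun a c => neg_eq_zero.1 ((hER a c).symm.trans ?_),
      fun a c => neg_eq_zero.1 ((hBR a c).symm.trans ?_)⟩
    · simp [hR0]
    · simp [hR0, hodge_zero]
  · rintro ⟨ha, hb⟩
    refine doubleTwoForm_eq_zero (fun c d => ?_) hR_right hR_comm hn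
      (fun a c => (hER a c).trans (neg_eq_zero.2 (ha a c)))
      (fun a c => (hBR a c).trans (neg_eq_zero.2 (hb a c)))
    rw [hR_flip]
    exact hR_right c d
end
end

section
/- Let C be a Weyl candidate on Minkowski space V with electric part E = E(C) and magnetic part B = B(C) with respect to a unit timelike vector n. Then the quadratic Weyl scalars split as: (1/8) C^{μνλρ} C_{μνλρ} = E_{μν}E^{μν} − B_{μν}B^{μν} and (1/8) C^{μνλρ} (C*)_{μνλρ} = 2 E^{μν}B_{μν}, where all indices are raised with η. -/
noncomputable section

/-- Raise all four indices with `η`. -/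
def up4 (W : T4) : T4 := fun a b c d =>
  ∑ a' : Fin 4, ∑ b' : Fin 4, ∑ c' : Fin 4, ∑ d' : Fin 4,
    ηm a a' * ηm b b' * ηm c c' * ηm d d' * W a' b' c' d'

/-- Full contraction `S^{μνλρ} T_{μνλρ}`. -/
def contr4 (S T : T4) : ℝ :=
  ∑ a : Fin 4, ∑ b : Fin 4, ∑ c : Fin 4, ∑ d : Fin 4, up4 S a b c d * T a b c d

/-- The diagonal entries of the Minkowski metric. -/
def ηdiag (a : Fin 4) : ℝ := if a = 0 then -1 else 1

theorem ηm_eq_ite (a b : Fin 4) : ηm a b = if a = b then ηdiag a else 0 := rfl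

theorem eval4_e4_e4 (W : T4) (a c : Fin 4) (n : V4) :
    eval4 W (e4 a) n (e4 c) n = ∑ b, ∑ d, W a b c d * n b * n d := by
  simp [eval4, e4, Pi.single_apply]

theorem contr2_eq_sum (S T : T2) :
    contr2 S T = ∑ a, ∑ b, ηdiag a * ηdiag b * (S a b * T a b) := by
  simp only [contr2, up2, ηm_eq_ite]
  refine Finset.sum_congr rfl fun a _ => Finset.sum_congr rfl fun b _ => ?_
  simp
  ring

theorem contr4_eq_sum (S T : T4) :
    contr4 S T = ∑ a, ∑ b, ∑ c, ∑ d,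
      ηdiag a * ηdiag b * ηdiag c * ηdiag d * (S a b c d * T a b c d) := by
  simp only [contr4, up4, ηm_eq_ite]
  refine Finset.sum_congr rfl fun a _ => Finset.sum_congr rfl fun b _ =>
    Finset.sum_congr rfl fun c _ => Finset.sum_congr rfl fun d _ => ?_
  simp
  ring

theorem rightDual_eq_sum (W : T4) (a b c d : Fin 4) :
    rightDual W a b c d =
      (1 / 2) * ∑ γ, ∑ δ, ηdiag γ * ηdiag δ * (W a b γ δ * volc γ δ c d) := by
  simp only [rightDual, ηm_eq_ite]
  congr 1
  refine Finset.sum_congr rfl fun γ _ => Finset.sum_congr rfl fun δ _ => ?_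
  simp
  ring

theorem volv_eq (x y z w : V4) :
    volv x y z w =
      (x 0 * y 1 - x 1 * y 0) * (z 2 * w 3 - z 3 * w 2)
      - (x 0 * y 2 - x 2 * y 0) * (z 1 * w 3 - z 3 * w 1)
      + (x 0 * y 3 - x 3 * y 0) * (z 1 * w 2 - z 2 * w 1)
      + (x 1 * y 2 - x 2 * y 1) * (z 0 * w 3 - z 3 * w 0)
      - (x 1 * y 3 - x 3 * y 1) * (z 0 * w 2 - z 2 * w 0)
      + (x 2 * y 3 - x 3 * y 2) * (z 0 * w 1 - z 1 * w 0) := by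
  simp [volv, Matrix.det_succ_row_zero, Fin.sum_univ_succ, Fin.succAbove]
  ring

/-- The right dual of a form antisymmetric in its last pair of indices. -/
theorem rightDual_eq (W : T4) (hW : ∀ a b c d, W a b c d = -W a b d c) (a b c d : Fin 4) :
    rightDual W a b c d =
      W a b 2 3 * (e4 c 0 * e4 d 1 - e4 c 1 * e4 d 0)
      - W a b 1 3 * (e4 c 0 * e4 d 2 - e4 c 2 * e4 d 0)
      + W a b 1 2 * (e4 c 0 * e4 d 3 - e4 c 3 * e4 d 0)
      - W a b 0 3 * (e4 c 1 * e4 d 2 - e4 c 2 * e4 d 1)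
      + W a b 0 2 * (e4 c 1 * e4 d 3 - e4 c 3 * e4 d 1)
      - W a b 0 1 * (e4 c 2 * e4 d 3 - e4 c 3 * e4 d 2) := by
  rw [rightDual_eq_sum]
  simp only [Fin.sum_univ_four, volc, volv_eq]
  rw [hW a b 1 0, hW a b 2 0, hW a b 3 0, hW a b 2 1, hW a b 3 1, hW a b 3 2]
  simp [e4, ηdiag, Pi.single_apply]
  ring
theorem IsWeyl.symmetries {C : T4} (hC : IsWeyl C) :
    (∀ a b c d, C a b c d = -C b a c d) ∧ (∀ a b c d, C a b c d = -C a b d c) ∧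
    (∀ a b c d, C a b c d = C c d a b) ∧
    (∀ a b c d, C a b c d + C a c d b + C a d b c = 0) ∧
    ∀ b d, -C 0 b 0 d + C 1 b 1 d + C 2 b 2 d + C 3 b 3 d = 0 := by
  obtain ⟨h₁, h₂, h₃, h₄, h₅⟩ := hC
  refine ⟨fun a b c d => ?_, fun a b c d => ?_, fun a b c d => ?_, fun a b c d => ?_,
    fun b d => ?_⟩
  · simpa only [eval4_e4] using h₁ (e4 a) (e4 b) (e4 c) (e4 d)
  · simpa only [eval4_e4] using h₂ (e4 a) (e4 b) (e4 c) (e4 d)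
  · simpa only [eval4_e4] using h₃ (e4 a) (e4 b) (e4 c) (e4 d)
  · simpa only [eval4_e4] using h₄ (e4 a) (e4 b) (e4 c) (e4 d)
  · simpa [eval4_e4, ηm_eq_ite, ηdiag, Fin.sum_univ_four] using h₅ (e4 b) (e4 d)

set_option maxHeartbeats 4000000 in
/-- The splitting of the quadratic scalars, homogenised to degree four in `n`. -/
theorem IsWeyl.contr4_mul_sq {C : T4} (hC : IsWeyl C) (n : V4) :
    (1/8) * contr4 C C * η n n ^ 2 =
      contr2 (Epart C n) (Epart C n) - contr2 (Bpart C n) (Bpart C n) ∧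
    (1/8) * contr4 C (rightDual C) * η n n ^ 2 = 2 * contr2 (Epart C n) (Bpart C n) := by
  obtain ⟨hA, hA', hP, hB, hT⟩ := hC.symmetries
  have hD : ∀ a c d, C a a c d = 0 := fun a c d => by linarith [hA a a c d]
  have hD' : ∀ a b c, C a b c c = 0 := fun a b c => by linarith [hA' a b c c]
  have hR : ∀ a b, C a b 1 0 = -C a b 0 1 ∧ C a b 2 0 = -C a b 0 2 ∧ C a b 3 0 = -C a b 0 3 ∧
      C a b 2 1 = -C a b 1 2 ∧ C a b 3 1 = -C a b 1 3 ∧ C a b 3 2 = -C a b 2 3 :=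
    fun a b => ⟨hA' _ _ _ _, hA' _ _ _ _, hA' _ _ _ _, hA' _ _ _ _, hA' _ _ _ _, hA' _ _ _ _⟩
  -- Only ten components are independent: the others are eliminated.
  have t00 := hT 0 0
  have t01 := hT 0 1
  have t02 := hT 0 2
  have t03 := hT 0 3
  have t11 := hT 1 1
  have t12 := hT 1 2
  have t13 := hT 1 3
  have t22 := hT 2 2
  have t23 := hT 2 3
  have t33 := hT 3 3
  have bianchi := hB 0 1 2 3
  simp only [hD, hD', hR, hA 1 0, hA 2 0, hA 3 0, hA 2 1, hA 3 1, hA 3 2]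
    at t00 t01 t02 t03 t11 t12 t13 t22 t23 t33 bianchi
  have c0303 : C 0 3 0 3 = -C 0 1 0 1 - C 0 2 0 2 := by linarith
  have c2323 : C 2 3 2 3 = -C 0 1 0 1 := by linarith
  have c1313 : C 1 3 1 3 = -C 0 2 0 2 := by linarith
  have c1212 : C 1 2 1 2 = C 0 1 0 1 + C 0 2 0 2 := by linarith
  have c1323 : C 1 3 2 3 = C 0 1 0 2 := by linarith
  have c1223 : C 1 2 2 3 = -C 0 1 0 3 := by linarith
  have c1213 : C 1 2 1 3 = C 0 2 0 3 := by linarith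
  have c0313 : C 0 3 1 3 = -C 0 2 1 2 := by linarith
  have c0323 : C 0 3 2 3 = C 0 1 1 2 := by linarith
  have c0223 : C 0 2 2 3 = -C 0 1 1 3 := by linarith
  have c0312 : C 0 3 1 2 = C 0 2 1 3 - C 0 1 2 3 := by linarith
  simp only [contr4_eq_sum, contr2_eq_sum, Epart, Bpart, eval4_e4_e4, Fin.sum_univ_four,
    rightDual_eq C hA', η]
  simp only [e4, ηdiag, Pi.single_apply, Fin.reduceEq, if_true, if_false]
  simp only [hD, hD', hR, hA 1 0, hA 2 0, hA 3 0, hA 2 1, hA 3 1, hA 3 2]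
  simp only [hP 0 2 0 1, hP 0 3 0 1, hP 1 2 0 1, hP 1 3 0 1, hP 2 3 0 1, hP 0 3 0 2, hP 1 2 0 2,
    hP 1 3 0 2, hP 2 3 0 2, hP 1 2 0 3, hP 1 3 0 3, hP 2 3 0 3, hP 1 3 1 2, hP 2 3 1 2, hP 2 3 1 3,
    c0303, c2323, c1313, c1212, c1323, c1223, c1213, c0313, c0323, c0223, c0312]
  generalize C 0 1 0 1 = a0101
  generalize C 0 1 0 2 = a0102
  generalize C 0 1 0 3 = a0103
  generalize C 0 2 0 2 = a0202
  generalize C 0 2 0 3 = a0203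
  generalize C 0 1 1 2 = a0112
  generalize C 0 1 1 3 = a0113
  generalize C 0 1 2 3 = a0123
  generalize C 0 2 1 2 = a0212
  generalize C 0 2 1 3 = a0213
  generalize n 0 = n0
  generalize n 1 = n1
  generalize n 2 = n2
  generalize n 3 = n3
  constructor <;> ring

/-- the quadratic Weyl scalars split as
`(1/8) C^{μνλρ}C_{μνλρ} = E_{μν}E^{μν} − B_{μν}B^{μν}` and
`(1/8) C^{μνλρ}(C*)_{μνλρ} = 2 E^{μν}B_{μν}`. -/
theorem stmt_3 (C : T4) (hC : IsWeyl C) (n : V4) (hn : η n n = -1)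
    (E B : T2) (hE : E = Epart C n) (hB : B = Bpart C n) :
    (1/8) * contr4 C C = contr2 E E - contr2 B B ∧
    (1/8) * contr4 C (rightDual C) = 2 * contr2 E B := by
  subst hE hB
  simpa [hn] using hC.contr4_mul_sq n
end
end
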